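/- Let G be the hypercube graph on the vertex set Fin 4 → ZMod 2, where two vertices are adjacent if and only if they differ in exactly one coordinate. Then G admits a completely degenerate equilibrium of the identical Kuramoto system. -/

import Mathlib

open Real

open Classical in
/-- Adjacency indicator: `1` if `j` and `k` are adjacent in `G`, `0` otherwise. -/
noncomputable def adjInd {V : Type*} (G : SimpleGraph V) (j k : V) : ℝ :=
  if G.Adj j k then 1 else 0

/-- A completely degenerate equilibrium of the identical Kuramoto system on `G`. -/
def IsCDE {V : Type*} [Fintype V] (G : SimpleGraph V) (θ : V → ℝ) : Prop :=
  (∀ k, ∑ j, adjInd G j k * Real.sin (θ j - θ k) = 0) ∧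
  (∀ j k, G.Adj j k → Real.cos (θ j - θ k) = 0)

def mm (v : Fin 4 → ZMod 2) : ℤ :=
  ((v 0 + v 1 + v 2 + v 3).val : ℤ) + 2 * ((v 0 + v 1).val : ℤ)

def SS (n : ℤ) : ℤ := if n % 4 = 1 then 1 else if n % 4 = 3 then -1 else 0

def AA (u v : Fin 4 → ZMod 2) : Prop := (Finset.univ.filter (fun i => u i ≠ v i)).card = 1

instance (u v : Fin 4 → ZMod 2) : Decidable (AA u v) :=
  inferInstanceAs (Decidable (_ = _))

lemma sum_zero : ∀ k : Fin 4 → ZMod 2, ∑ j, (if AA j k then SS (mm j - mm k) else 0) = 0 := by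
  decide +kernel

lemma odd_diff : ∀ j k : Fin 4 → ZMod 2, AA j k → (mm j - mm k) % 2 = 1 := by
  decide +kernel

lemma sin_SS (n : ℤ) : Real.sin ((n : ℝ) * (π / 2)) = SS n := by
  obtain ⟨q, r, hn, hr⟩ : ∃ q r : ℤ, n = r + 4 * q ∧ (r = 0 ∨ r = 1 ∨ r = 2 ∨ r = 3) :=
    ⟨n / 4, n % 4, by omega, by omega⟩
  have h1 : Real.sin ((n : ℝ) * (π / 2)) = Real.sin ((r : ℝ) * (π / 2)) := by
    rw [← Real.sin_add_int_mul_two_pi ((r : ℝ) * (π / 2)) q, hn]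
    congr 1
    push_cast
    ring
  have h2 : SS n = SS r := by
    unfold SS
    have : n % 4 = r % 4 := by omega
    rw [this]
  rw [h1, h2]
  rcases hr with rfl | rfl | rfl | rfl
  · simp [SS]
  · simp [SS]
  · have : ((2 : ℤ) : ℝ) * (π / 2) = π := by push_cast; ring
    rw [this]; simp [SS]
  · have : ((3 : ℤ) : ℝ) * (π / 2) = π / 2 + π := by push_cast; ring
    rw [this, Real.sin_add_pi]; simp [SS]

lemma cos_odd (n : ℤ) (h : n % 2 = 1) : Real.cos ((n : ℝ) * (π / 2)) = 0 := by
  rw [Real.cos_eq_zero_iff]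
  refine ⟨n / 2, ?_⟩
  have : n = 2 * (n / 2) + 1 := by omega
  have h2 : (n : ℝ) = 2 * ((n / 2 : ℤ) : ℝ) + 1 := by exact_mod_cast this
  rw [h2]; ring_nf

/-- the hypercube graph on `Fin 4 → ZMod 2` (adjacent iff differing in exactly
one coordinate) admits a completely degenerate equilibrium. -/
theorem stmt4 (G : SimpleGraph (Fin 4 → ZMod 2))
    (hG : ∀ u v : Fin 4 → ZMod 2, G.Adj u v ↔ ({i | u i ≠ v i} : Set (Fin 4)).ncard = 1) :
    ∃ θ : (Fin 4 → ZMod 2) → ℝ, IsCDE G θ := by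
  have hA : ∀ u v, G.Adj u v ↔ AA u v := by
    intro u v
    rw [hG, AA, ← Set.ncard_coe_finset]
    simp
  have hd : ∀ j k, (mm j : ℝ) * (π / 2) - (mm k : ℝ) * (π / 2)
      = ((mm j - mm k : ℤ) : ℝ) * (π / 2) := by
    intro j k
    push_cast
    ring
  refine ⟨fun v => (mm v : ℝ) * (π / 2), ?_, ?_⟩
  · intro k
    have h := congrArg (fun z : ℤ => (z : ℝ)) (sum_zero k)
    simp only [Int.cast_sum, Int.cast_zero] at h
    rw [← h]
    refine Finset.sum_congr rfl fun j _ => ?_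
    simp only [hd, sin_SS, adjInd, hA]
    by_cases hh : AA j k <;> simp [hh]
  · intro j k hjk
    simp only [hd]
    exact cos_odd _ (odd_diff j k ((hA j k).1 hjk))
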